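/- Let Q_A = ℝ[p_1,…,p_6]/(R_1, R_2, R_3, R_4) and Q_B = ℝ[q_1,…,q_6]/(R′_1, R′_2, R′_3, R′_4), where R_1 = p_1²p_2 − p_3p_4; R_2 = 27(4p_2³(3p_1 + 2p_2) + (p_1 + 6p_2)p_3p_4) − 8p_5p_6; R_3 = −81p_1²p_3p_4 − 8(−54p_2⁵ + 54p_1p_2p_3p_4 + 81p_2²p_3p_4 − 3p_1p_5p_6 + 2p_2p_5p_6); R_4 = 27p_3p_4(p_1³ + 12p_1p_2² + 8p_2³ + 6p_3p_4) − 8p_1²p_5p_6; and R′_1 = 4q_2(q_1 + 3q_2)² − 9q_3q_4; R′_2 = 108q_2³(q_1 + 2q_2) + 9(q_1 − 6q_2)q_3q_4 − 4q_5q_6; R′_3 = 108q_2⁵ − 9(q_1² − 2q_1q_2 + 3q_2²)q_3q_4 + 4(q_1 + 4q_2)q_5q_6; R′_4 = 9q_1³q_3q_4 − 4(q_1 + 3q_2)²q_5q_6. Then for every degree-preserving isomorphism of graded ℝ-algebras Φ : Q_A → Q_B there exists a real number c ≠ 0 such that Φ(p_1) = −(2c/3)·q_1 − 2c·q_2 and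 Φ(p_2) = c·q_2 (as classes in Q_B). In particular, either Φ(p_1) or Φ(p_2) is a nonzero linear combination of q_1, q_2 with some negative coefficient, so no graded isomorphism Q_A → Q_B can map both p_1 and p_2 to nonnegative combinations of q_1 and q_2. -/

import Mathlib

open MvPolynomial

/-- The polynomial ring `ℝ[p_1,…,p_6]` (resp. `ℝ[q_1,…,q_6]`), with `p_i` (resp. `q_i`)
the variable `X (i-1)`. -/
abbrev P6 := MvPolynomial (Fin 6) ℝ

/-- The weights `deg p_1 = deg p_2 = 2`, `deg p_3 = deg p_4 = 3`,
`deg p_5 = deg p_6 = 4` (same for the `q_i`). -/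
def w6 : Fin 6 → ℕ := ![2, 2, 3, 3, 4, 4]

set_option maxHeartbeats 2000000 in
/-- The ideal `(R_1, R_2, R_3, R_4)` of relations on the `A = (-2,3,6)` side. -/
noncomputable def idA : Ideal P6 := Ideal.span
  { X 0 ^ 2 * X 1 - X 2 * X 3,
    27 * (4 * X 1 ^ 3 * (3 * X 0 + 2 * X 1) + (X 0 + 6 * X 1) * X 2 * X 3)
      - 8 * X 4 * X 5,
    -81 * X 0 ^ 2 * X 2 * X 3
      - 8 * (-54 * X 1 ^ 5 + 54 * X 0 * X 1 * X 2 * X 3 + 81 * X 1 ^ 2 * X 2 * X 3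
          - 3 * X 0 * X 4 * X 5 + 2 * X 1 * X 4 * X 5),
    27 * X 2 * X 3 * (X 0 ^ 3 + 12 * X 0 * X 1 ^ 2 + 8 * X 1 ^ 3 + 6 * X 2 * X 3)
      - 8 * X 0 ^ 2 * X 4 * X 5 }

set_option maxHeartbeats 2000000 in
/-- The ideal `(R'_1, R'_2, R'_3, R'_4)` of relations on the `B = (-3,2,6)` side. -/
noncomputable def idB : Ideal P6 := Ideal.span
  { 4 * X 1 * (X 0 + 3 * X 1) ^ 2 - 9 * X 2 * X 3,
    108 * X 1 ^ 3 * (X 0 + 2 * X 1) + 9 * (X 0 - 6 * X 1) * X 2 * X 3 - 4 * X 4 * X 5,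
    108 * X 1 ^ 5 - 9 * (X 0 ^ 2 - 2 * X 0 * X 1 + 3 * X 1 ^ 2) * X 2 * X 3
      + 4 * (X 0 + 4 * X 1) * X 4 * X 5,
    9 * X 0 ^ 3 * X 2 * X 3 - 4 * (X 0 + 3 * X 1) ^ 2 * X 4 * X 5 }

/-
In both ideals the last two relations follow from the first two, and each quotient has the form
`ℝ[x, y, u, v, s, t] / (uv - F, st - G)` for a binary cubic `F` and a binary quartic `G`, namely
`F = x²y` and `G ~ (x + 2y)³y` on the `A` side, `F' ~ (x + 3y)²y` and `G' = x³y` on the `B` side.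
A graded isomorphism restricts to a linear automorphism `σ` of `ℝ[x, y]`, and comparing the images
of `uv` and `st` in degrees `6` and `8` shows that `σ F ~ F'` and `σ G ~ G'`. By unique
factorization `σ` matches the multiple factors and the simple ones, so `σ x ~ x + 3y`, `σ y ~ y`
and `σ (x + 2y) ~ x`. The last condition fixes the ratio of the first two scalars.
-/

section LinearForms

variable {R : Type*} [CommSemiring R]

lemma isHomogeneous_linearForm (a b : R) :
    (C a * X 0 + C b * X 1 : MvPolynomial (Fin 2) R).IsHomogeneous 1 :=
  (isHomogeneous_C_mul_X a 0).add (isHomogeneous_C_mul_X b 1)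

lemma isHomogeneous_C_mul_linearForm_pow_mul_X (r b : R) (k : ℕ) :
    (C r * ((X 0 + C b * X 1) ^ k * X 1) : MvPolynomial (Fin 2) R).IsHomogeneous (k + 1) := by
  have hl : (X 0 + C b * X 1 : MvPolynomial (Fin 2) R).IsHomogeneous 1 := by
    simpa using isHomogeneous_linearForm 1 b
  simpa using ((hl.pow k).mul (isHomogeneous_X R 1)).C_mul r

lemma isHomogeneous_binaryMonomial (r : R) (m n : ℕ) :
    (C r * (X 0 ^ m * X 1 ^ n) : MvPolynomial (Fin 2) R).IsHomogeneous (m + n) :=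
  ((isHomogeneous_X_pow 0 m).mul (isHomogeneous_X_pow 1 n)).C_mul r

lemma linearForm_inj {a b a' b' : R} :
    (C a * X 0 + C b * X 1 : MvPolynomial (Fin 2) R) = C a' * X 0 + C b' * X 1 ↔
      a = a' ∧ b = b' := by
  refine ⟨fun h ↦ ⟨?_, ?_⟩, fun h ↦ by rw [h.1, h.2]⟩
  · simpa using congrArg (eval ![1, 0]) h
  · simpa using congrArg (eval ![0, 1]) h

variable {σ K : Type*} [Field K]

lemma prime_of_isHomogeneous_one {p : MvPolynomial σ K} (hp : p.IsHomogeneous 1) (h0 : p ≠ 0) :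
    Prime p := by
  obtain ⟨d, hd⟩ := ne_zero_iff.1 h0
  refine (irreducible_of_totalDegree_eq_one (hp.totalDegree h0) fun c hc ↦ ?_).prime
  exact isUnit_iff_ne_zero.2 (ne_zero_of_dvd_ne_zero hd (hc d))

lemma prime_X (i : σ) : Prime (X i : MvPolynomial σ K) :=
  prime_of_isHomogeneous_one (isHomogeneous_X K i) (X_ne_zero i)

lemma exists_eq_C_mul_of_associated {p q : MvPolynomial σ K} (h : Associated p q) :
    ∃ c : K, c ≠ 0 ∧ p = C c * q := by
  obtain ⟨u, rfl⟩ := h.symm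
  obtain ⟨c, hc, hu⟩ := isUnit_iff_eq_C_of_isReduced.1 u.isUnit
  exact ⟨c, hc.ne_zero, by rw [hu, mul_comm]⟩

lemma associated_C_mul {r : K} (hr : r ≠ 0) (p : MvPolynomial σ K) :
    Associated (C r * p) p :=
  associated_unit_mul_left p _ (hr.isUnit.map C)

lemma prime_linearForm {a b : K} (h : a ≠ 0 ∨ b ≠ 0) :
    Prime (C a * X 0 + C b * X 1 : MvPolynomial (Fin 2) K) := by
  refine prime_of_isHomogeneous_one (isHomogeneous_linearForm a b) fun h0 ↦ ?_
  have hab : a = 0 ∧ b = 0 := linearForm_inj.1 (by simpa using h0)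
  tauto

end LinearForms

lemma associated_of_associated_pow_mul {M : Type*} [CommMonoidWithZero M] [IsCancelMulZero M]
    {p q p' q' : M} (hp : Prime p) (hq : Prime q) (hp' : Prime p') {k : ℕ} (hk : 2 ≤ k)
    (h : Associated (p ^ k * q) (p' ^ k * q')) : Associated p p' ∧ Associated q q' := by
  have hpp' : Associated p p' := by
    refine (hp'.associated_of_dvd hp ?_).symm
    have hdvd : p' ∣ p ^ k * q := (dvd_mul_of_dvd_left (dvd_pow_self p' (by omega)) q').trans h.dvd'
    rcases hp'.dvd_or_dvd hdvd with hd | hd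
    · exact hp'.dvd_of_dvd_pow hd
    · have hqp' : Associated q p' := (hp'.associated_of_dvd hq hd).symm
      have hcancel : Associated (p ^ k) (p' ^ (k - 1) * q') := by
        refine Associated.of_mul_right (h.trans (.of_eq ?_)) hqp' hq.ne_zero
        rw [mul_right_comm, pow_sub_one_mul (by omega)]
      refine hp'.dvd_of_dvd_pow (n := k) (dvd_trans ?_ hcancel.dvd')
      exact dvd_mul_of_dvd_left (dvd_pow_self p' (by omega)) q'
  exact ⟨hpp', h.of_mul_left hpp'.pow_pow (pow_ne_zero k hp.ne_zero)⟩

section ProductIdeal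

variable {R : Type*} [CommRing R]

/-- The inclusion of `R[x, y]` into `R[x, y, u, v, s, t]`, the six variables being `X 0, …, X 5`;
it multiplies degrees by two for the weights `w6`. -/
noncomputable def ofBinary : MvPolynomial (Fin 2) R →ₐ[R] MvPolynomial (Fin 6) R :=
  rename ![0, 1]

/-- The ideal `(uv - F, st - G)` of `R[x, y, u, v, s, t]`, for `F` and `G` in `R[x, y]`. Both ideals
of the theorem are of this form, with `F` a binary cubic and `G` a binary quartic. -/
noncomputable def productIdeal (F G : MvPolynomial (Fin 2) R) : Ideal (MvPolynomial (Fin 6) R) :=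
  Ideal.span {X 2 * X 3 - ofBinary F, X 4 * X 5 - ofBinary G}

variable {F G : MvPolynomial (Fin 2) R}

lemma mk_X_two_mul_X_three :
    Ideal.Quotient.mk (productIdeal F G) (X 2 * X 3) =
      Ideal.Quotient.mk (productIdeal F G) (ofBinary F) :=
  Ideal.Quotient.eq.2 (Ideal.subset_span (by simp))

lemma mk_X_four_mul_X_five :
    Ideal.Quotient.mk (productIdeal F G) (X 4 * X 5) =
      Ideal.Quotient.mk (productIdeal F G) (ofBinary G) :=
  Ideal.Quotient.eq.2 (Ideal.subset_span (by simp))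

lemma bind₁_ofBinary (u v s t f : MvPolynomial (Fin 2) R) :
    bind₁ ![X 0, X 1, u, v, s, t] (ofBinary f) = f := by
  have hX : ![X 0, X 1, u, v, s, t] ∘ ![0, 1] = X := by
    ext1 i
    fin_cases i <;> rfl
  rw [ofBinary, bind₁_rename, hX, bind₁_X_left, AlgHom.id_apply]

/-- The retraction of `R[x, y, u, v, s, t] ⧸ (uv - F, st - G)` onto `R[x, y]` attached to
factorizations of `F` and `G`. -/
noncomputable def retraction (u v s t : MvPolynomial (Fin 2) R) (huv : u * v = F)
    (hst : s * t = G) :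
    (MvPolynomial (Fin 6) R ⧸ productIdeal F G) →ₐ[R] MvPolynomial (Fin 2) R :=
  Ideal.Quotient.liftₐ _ (bind₁ ![X 0, X 1, u, v, s, t]) fun p hp ↦ by
    suffices productIdeal F G ≤ RingHom.ker (bind₁ ![X 0, X 1, u, v, s, t]) from this hp
    rw [productIdeal, Ideal.span_le, Set.pair_subset_iff]
    constructor <;> simp [bind₁_ofBinary, huv, hst]

lemma retraction_mk {u v s t : MvPolynomial (Fin 2) R} (huv : u * v = F) (hst : s * t = G)
    (p : MvPolynomial (Fin 6) R) :
    retraction u v s t huv hst (Ideal.Quotient.mk _ p) = bind₁ ![X 0, X 1, u, v, s, t] p :=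
  rfl

lemma mk_ofBinary_injective (F G : MvPolynomial (Fin 2) R) :
    Function.Injective fun f ↦ Ideal.Quotient.mk (productIdeal F G) (ofBinary f) := by
  intro f g h
  simpa only [retraction_mk, bind₁_ofBinary] using
    congrArg (retraction 1 F 1 G (one_mul F) (one_mul G)) h

lemma linearForm_inj_of_mk_eq_mk {a b a' b' : R}
    (h : Ideal.Quotient.mk (productIdeal F G) (C a * X 0 + C b * X 1) =
      Ideal.Quotient.mk (productIdeal F G) (C a' * X 0 + C b' * X 1)) : a = a' ∧ b = b' :=
  linearForm_inj.1 <| mk_ofBinary_injective F G <| by simpa [ofBinary] using h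

lemma mk_X_four_ne_mk_ofBinary [Nontrivial R] (hG : constantCoeff G = 0)
    (f : MvPolynomial (Fin 2) R) :
    Ideal.Quotient.mk (productIdeal F G) (X 4) ≠
      Ideal.Quotient.mk (productIdeal F G) (ofBinary f) := by
  intro h
  have h1 : 1 = f := by
    simpa [retraction_mk, bind₁_ofBinary] using
      congrArg (retraction 1 F 1 G (one_mul F) (one_mul G)) h
  have h2 : G = f := by
    simpa [retraction_mk, bind₁_ofBinary] using
      congrArg (retraction 1 F G 1 (one_mul F) (mul_one G)) h
  simp [h2, ← h1] at hG

end ProductIdeal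

section WeightedHomogeneous

variable {R : Type*} [CommRing R] {f : MvPolynomial (Fin 6) R}

lemma weight_w6 (d : Fin 6 →₀ ℕ) :
    Finsupp.weight w6 d = 2 * d 0 + 2 * d 1 + 3 * d 2 + 3 * d 3 + 4 * d 4 + 4 * d 5 := by
  rw [Finsupp.weight_apply, Finsupp.sum_fintype _ _ (by simp), Fin.sum_univ_six]
  simp only [w6, smul_eq_mul]
  simp [mul_comm]

lemma monomial_fin_six (d : Fin 6 →₀ ℕ) (r : R) :
    monomial d r =
      C r * (X 0 ^ d 0 * X 1 ^ d 1 * X 2 ^ d 2 * X 3 ^ d 3 * X 4 ^ d 4 * X 5 ^ d 5) := by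
  rw [monomial_eq, Finsupp.prod_fintype _ _ (by simp), Fin.prod_univ_six]

lemma exists_eq_ofBinary_of_weight_two (hf : f.IsWeightedHomogeneous w6 2) :
    ∃ l : MvPolynomial (Fin 2) R, l.IsHomogeneous 1 ∧ f = ofBinary l := by
  induction hf using IsWeightedHomogeneous.induction_on with
  | zero => exact ⟨0, isHomogeneous_zero _ _ _, by simp⟩
  | add p q _ _ hp hq =>
    obtain ⟨l, hl, rfl⟩ := hp
    obtain ⟨l', hl', rfl⟩ := hq
    exact ⟨l + l', hl.add hl', (map_add _ _ _).symm⟩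
  | monomial d r hd =>
    rw [weight_w6] at hd
    obtain ⟨h2, h3, h4, h5, h01⟩ : d 2 = 0 ∧ d 3 = 0 ∧ d 4 = 0 ∧ d 5 = 0 ∧ d 0 + d 1 = 1 := by
      omega
    refine ⟨C r * (X 0 ^ d 0 * X 1 ^ d 1), ?_, ?_⟩
    · simpa only [h01] using isHomogeneous_binaryMonomial r (d 0) (d 1)
    · simp [monomial_fin_six, ofBinary, h2, h3, h4, h5]

lemma exists_eq_add_of_weight_three (hf : f.IsWeightedHomogeneous w6 3) :
    ∃ a b : R, f = C a * X 2 + C b * X 3 := by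
  induction hf using IsWeightedHomogeneous.induction_on with
  | zero => exact ⟨0, 0, by simp⟩
  | add p q _ _ hp hq =>
    obtain ⟨a, b, rfl⟩ := hp
    obtain ⟨a', b', rfl⟩ := hq
    exact ⟨a + a', b + b', by simp only [C_add]; ring⟩
  | monomial d r hd =>
    rw [weight_w6] at hd
    obtain ⟨h0, h1, h4, h5, h23⟩ : d 0 = 0 ∧ d 1 = 0 ∧ d 4 = 0 ∧ d 5 = 0 ∧
        (d 2 = 1 ∧ d 3 = 0 ∨ d 2 = 0 ∧ d 3 = 1) := by
      omega
    rw [monomial_fin_six, h0, h1, h4, h5]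
    rcases h23 with ⟨h2, h3⟩ | ⟨h2, h3⟩
    · exact ⟨r, 0, by simp [h2, h3]⟩
    · exact ⟨0, r, by simp [h2, h3]⟩

lemma exists_eq_add_ofBinary_of_weight_four (hf : f.IsWeightedHomogeneous w6 4) :
    ∃ (a b : R) (q : MvPolynomial (Fin 2) R), q.IsHomogeneous 2 ∧
      f = C a * X 4 + C b * X 5 + ofBinary q := by
  induction hf using IsWeightedHomogeneous.induction_on with
  | zero => exact ⟨0, 0, 0, isHomogeneous_zero _ _ _, by simp⟩
  | add p p' _ _ hp hp' =>
    obtain ⟨a, b, q, hq, rfl⟩ := hp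
    obtain ⟨a', b', q', hq', rfl⟩ := hp'
    exact ⟨a + a', b + b', q + q', hq.add hq', by simp only [map_add]; ring⟩
  | monomial d r hd =>
    rw [weight_w6] at hd
    obtain ⟨h2, h3, h⟩ : d 2 = 0 ∧ d 3 = 0 ∧
        ((d 0 = 0 ∧ d 1 = 0 ∧ d 4 = 1 ∧ d 5 = 0) ∨ (d 0 = 0 ∧ d 1 = 0 ∧ d 4 = 0 ∧ d 5 = 1) ∨
          (d 0 + d 1 = 2 ∧ d 4 = 0 ∧ d 5 = 0)) := by
      omega
    rw [monomial_fin_six, h2, h3]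
    rcases h with ⟨h0, h1, h4, h5⟩ | ⟨h0, h1, h4, h5⟩ | ⟨h01, h4, h5⟩
    · exact ⟨r, 0, 0, isHomogeneous_zero _ _ _, by simp [h0, h1, h4, h5]⟩
    · exact ⟨0, r, 0, isHomogeneous_zero _ _ _, by simp [h0, h1, h4, h5]⟩
    · refine ⟨0, 0, C r * (X 0 ^ d 0 * X 1 ^ d 1), ?_, by simp [ofBinary, h4, h5]⟩
      simpa only [h01] using isHomogeneous_binaryMonomial r (d 0) (d 1)

end WeightedHomogeneous

section GradedEquiv

variable {R : Type*} [CommRing R] {I J : Ideal (MvPolynomial (Fin 6) R)}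

/-- `Φ` is an isomorphism of graded algebras for the gradings by `w6`: it carries the image of the
polynomials of weight `d` onto the image of the polynomials of weight `d`. -/
def IsGradedEquiv
    (Φ : (MvPolynomial (Fin 6) R ⧸ I) ≃ₐ[R] (MvPolynomial (Fin 6) R ⧸ J)) : Prop :=
  ∀ d : ℕ,
    Φ '' (Ideal.Quotient.mk I '' {f : MvPolynomial (Fin 6) R | f.IsWeightedHomogeneous w6 d}) =
      Ideal.Quotient.mk J '' {f : MvPolynomial (Fin 6) R | f.IsWeightedHomogeneous w6 d}

/-- `Φ` restricts to `σ` on the subalgebra generated by the two variables of weight two. -/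
def RestrictsTo (Φ : (MvPolynomial (Fin 6) R ⧸ I) ≃ₐ[R] (MvPolynomial (Fin 6) R ⧸ J))
    (σ : MvPolynomial (Fin 2) R →ₐ[R] MvPolynomial (Fin 2) R) : Prop :=
  ∀ f, Φ (Ideal.Quotient.mk I (ofBinary f)) = Ideal.Quotient.mk J (ofBinary (σ f))

variable {Φ : (MvPolynomial (Fin 6) R ⧸ I) ≃ₐ[R] (MvPolynomial (Fin 6) R ⧸ J)}

lemma RestrictsTo.apply_mk_X_zero {σ : MvPolynomial (Fin 2) R →ₐ[R] MvPolynomial (Fin 2) R}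
    (h : RestrictsTo Φ σ) {a b : R} (hσ : σ (X 0) = C a * X 0 + C b * X 1) :
    Φ (Ideal.Quotient.mk I (X 0)) = Ideal.Quotient.mk J (C a * X 0 + C b * X 1) := by
  simpa [ofBinary, hσ] using h (X 0)

lemma RestrictsTo.apply_mk_X_one {σ : MvPolynomial (Fin 2) R →ₐ[R] MvPolynomial (Fin 2) R}
    (h : RestrictsTo Φ σ) {b : R} (hσ : σ (X 1) = C b * X 1) :
    Φ (Ideal.Quotient.mk I (X 1)) = Ideal.Quotient.mk J (C b * X 1) := by
  simpa [ofBinary, hσ] using h (X 1)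

lemma IsGradedEquiv.symm (hΦ : IsGradedEquiv Φ) : IsGradedEquiv Φ.symm := fun d ↦ by
  rw [← hΦ d, Set.image_image]
  simp

lemma IsGradedEquiv.exists_mk_eq (hΦ : IsGradedEquiv Φ) (i : Fin 6) :
    ∃ f : MvPolynomial (Fin 6) R, f.IsWeightedHomogeneous w6 (w6 i) ∧
      Φ (Ideal.Quotient.mk I (X i)) = Ideal.Quotient.mk J f := by
  obtain ⟨f, hf, hfΦ⟩ :=
    (hΦ (w6 i)).subset ⟨_, ⟨X i, isWeightedHomogeneous_X R w6 i, rfl⟩, rfl⟩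
  exact ⟨f, hf, hfΦ.symm⟩

lemma IsGradedEquiv.exists_restrictsTo (hΦ : IsGradedEquiv Φ) :
    ∃ σ : MvPolynomial (Fin 2) R →ₐ[R] MvPolynomial (Fin 2) R,
      (∀ i, (σ (X i)).IsHomogeneous 1) ∧ RestrictsTo Φ σ := by
  obtain ⟨f₀, hf₀, h₀⟩ := hΦ.exists_mk_eq 0
  obtain ⟨f₁, hf₁, h₁⟩ := hΦ.exists_mk_eq 1
  obtain ⟨l₀, hl₀, rfl⟩ := exists_eq_ofBinary_of_weight_two hf₀
  obtain ⟨l₁, hl₁, rfl⟩ := exists_eq_ofBinary_of_weight_two hf₁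
  refine ⟨bind₁ ![l₀, l₁], fun i ↦ ?_, fun f ↦ ?_⟩
  · fin_cases i <;> simpa
  · suffices (Φ.toAlgHom.comp ((Ideal.Quotient.mkₐ R I).comp ofBinary)) =
        ((Ideal.Quotient.mkₐ R J).comp ofBinary).comp (bind₁ ![l₀, l₁]) from
      DFunLike.congr_fun this f
    ext i
    fin_cases i <;> simp [ofBinary, h₀, h₁]

lemma RestrictsTo.symm {σ : MvPolynomial (Fin 2) R ≃ₐ[R] MvPolynomial (Fin 2) R}
    (h : RestrictsTo Φ σ) : RestrictsTo Φ.symm σ.symm := fun f ↦ by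
  rw [AlgEquiv.symm_apply_eq, h]
  simp

end GradedEquiv

section Invariants

variable {R : Type*} [CommRing R]

lemma isHomogeneous_apply_of_linear {τ : Type*} {σ : MvPolynomial τ R →ₐ[R] MvPolynomial τ R}
    (hσ : ∀ i, (σ (X i)).IsHomogeneous 1) {f : MvPolynomial τ R} {n : ℕ}
    (hf : f.IsHomogeneous n) : (σ f).IsHomogeneous n := by
  have h : (aeval (σ ∘ X) f).IsHomogeneous (1 * n) := hf.aeval _ hσ
  rwa [one_mul, ← aeval_unique σ] at h

lemma constantCoeff_eq_zero_of_isHomogeneous {τ : Type*} {f : MvPolynomial τ R} {n : ℕ}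
    (hf : f.IsHomogeneous n) (hn : n ≠ 0) : constantCoeff f = 0 :=
  hf.coeff_eq_zero (by simpa using hn.symm)

variable {F G F' G' : MvPolynomial (Fin 2) R}
  {Φ : (MvPolynomial (Fin 6) R ⧸ productIdeal F G) ≃ₐ[R]
    (MvPolynomial (Fin 6) R ⧸ productIdeal F' G')}

lemma comp_eq_id_of_restrictsTo {σ τ : MvPolynomial (Fin 2) R →ₐ[R] MvPolynomial (Fin 2) R}
    (hσ : RestrictsTo Φ σ) (hτ : RestrictsTo Φ.symm τ) : τ.comp σ = .id R _ := by
  ext1 i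
  apply mk_ofBinary_injective F G
  simp [← hτ _, ← hσ _]

lemma IsGradedEquiv.exists_algEquiv (hΦ : IsGradedEquiv Φ) :
    ∃ σ : MvPolynomial (Fin 2) R ≃ₐ[R] MvPolynomial (Fin 2) R,
      (∀ i, (σ (X i)).IsHomogeneous 1) ∧ (∀ i, (σ.symm (X i)).IsHomogeneous 1) ∧
        RestrictsTo Φ σ := by
  obtain ⟨σ, hσ, hΦσ⟩ := hΦ.exists_restrictsTo
  obtain ⟨τ, hτ, hΦτ⟩ := hΦ.symm.exists_restrictsTo
  exact ⟨.ofAlgHom σ τ (comp_eq_id_of_restrictsTo hΦτ hΦσ) (comp_eq_id_of_restrictsTo hΦσ hΦτ),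
    hσ, hτ, hΦσ⟩

lemma IsGradedEquiv.dvd_apply_of_isHomogeneous_three
    {σ : MvPolynomial (Fin 2) R ≃ₐ[R] MvPolynomial (Fin 2) R}
    (hΦ : IsGradedEquiv Φ) (hσ : ∀ i, (σ (X i)).IsHomogeneous 1) (hΦσ : RestrictsTo Φ σ)
    (hF : F.IsHomogeneous 3) (hF' : F'.IsHomogeneous 3) : F' ∣ σ F := by
  obtain ⟨f₂, hf₂, h₂⟩ := hΦ.exists_mk_eq 2
  obtain ⟨f₃, hf₃, h₃⟩ := hΦ.exists_mk_eq 3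
  obtain ⟨a, b, rfl⟩ := exists_eq_add_of_weight_three hf₂
  obtain ⟨c, d, rfl⟩ := exists_eq_add_of_weight_three hf₃
  have hmk : Ideal.Quotient.mk (productIdeal F' G') (ofBinary (σ F)) =
      Ideal.Quotient.mk _ ((C a * X 2 + C b * X 3) * (C c * X 2 + C d * X 3)) := by
    rw [map_mul, ← h₂, ← h₃, ← map_mul, ← map_mul, mk_X_two_mul_X_three, hΦσ]
    rfl
  have hσF : σ F = (C a + C b * F') * (C c + C d * F') := by
    simpa [retraction_mk, bind₁_ofBinary] using
      congrArg (retraction 1 F' 1 G' (one_mul F') (one_mul G')) hmk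
  have hac : a * c = 0 := by
    have hF₀ := constantCoeff_eq_zero_of_isHomogeneous
      (isHomogeneous_apply_of_linear (σ := (σ : _ →ₐ[R] _)) hσ hF) three_ne_zero
    have hF'₀ := constantCoeff_eq_zero_of_isHomogeneous hF' three_ne_zero
    simpa [hσF, hF'₀] using hF₀
  have hC : (C a * C c : MvPolynomial (Fin 2) R) = 0 := by rw [← C_mul, hac, C_0]
  exact ⟨C a * C d + C b * C c + C b * C d * F', by linear_combination hσF + hC⟩

lemma eq_zero_of_isHomogeneous_four_eq_add {τ : Type*} {H p₀ p₂ p₄ p₆ p₈ : MvPolynomial τ R}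
    (hH : H.IsHomogeneous 4) (h₀ : p₀.IsHomogeneous 0) (h₂ : p₂.IsHomogeneous 2)
    (h₄ : p₄.IsHomogeneous 4) (h₆ : p₆.IsHomogeneous 6) (h₈ : p₈.IsHomogeneous 8)
    (h : H = p₀ + p₂ + p₄ + p₆ + p₈) : p₀ = 0 ∧ p₂ = 0 := by
  have hcomp (n : ℕ) := congrArg (homogeneousComponent n) h
  simp only [map_add (homogeneousComponent _), homogeneousComponent_of_mem hH,
    homogeneousComponent_of_mem h₀, homogeneousComponent_of_mem h₂,
    homogeneousComponent_of_mem h₄, homogeneousComponent_of_mem h₆,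
    homogeneousComponent_of_mem h₈] at hcomp
  exact ⟨by simpa using (hcomp 0).symm, by simpa using (hcomp 2).symm⟩

lemma eq_zero_of_isHomogeneous_four_eq_mul {τ : Type*} {H G q r : MvPolynomial τ R} {a b c d : R}
    (hH : H.IsHomogeneous 4) (hG : G.IsHomogeneous 4) (hq : q.IsHomogeneous 2)
    (hr : r.IsHomogeneous 2) (h : H = (C a + C b * G + q) * (C c + C d * G + r)) :
    C a * C c = (0 : MvPolynomial τ R) ∧ C a * r + C c * q = 0 := by
  have hsplit : H = C a * C c + (C a * r + C c * q) + (q * r + C (a * d + b * c) * G) +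
      (C b * r + C d * q) * G + C (b * d) * (G * G) := by
    rw [h]
    simp only [C_add, C_mul]
    ring
  exact eq_zero_of_isHomogeneous_four_eq_add hH ((isHomogeneous_C _ c).C_mul a)
    ((hr.C_mul a).add (hq.C_mul c)) ((hq.mul hr).add (hG.C_mul _))
    (((hr.C_mul b).add (hq.C_mul d)).mul hG) ((hG.mul hG).C_mul _) hsplit

lemma mul_eq_zero_or_of_add_eq_zero [NoZeroDivisors R] {a c q r : R} (hac : a * c = 0)
    (h : a * r + c * q = 0) : q * r = 0 ∨ a = 0 ∧ c = 0 := by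
  rcases mul_eq_zero.1 hac with rfl | rfl
  · have hcq : c = 0 ∨ q = 0 := by simpa using h
    rcases hcq with hc | hq
    · exact .inr ⟨rfl, hc⟩
    · exact .inl (by simp [hq])
  · have har : a = 0 ∨ r = 0 := by simpa using h
    rcases har with ha | hr
    · exact .inr ⟨ha, rfl⟩
    · exact .inl (by simp [hr])

lemma IsGradedEquiv.dvd_apply_of_isHomogeneous_four [IsDomain R]
    {σ : MvPolynomial (Fin 2) R ≃ₐ[R] MvPolynomial (Fin 2) R}
    (hΦ : IsGradedEquiv Φ) (hσ : ∀ i, (σ (X i)).IsHomogeneous 1) (hΦσ : RestrictsTo Φ σ)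
    (hG : G.IsHomogeneous 4) (hG' : G'.IsHomogeneous 4) : G' ∣ σ G := by
  obtain ⟨f₄, hf₄, h₄⟩ := hΦ.exists_mk_eq 4
  obtain ⟨f₅, hf₅, h₅⟩ := hΦ.exists_mk_eq 5
  obtain ⟨a, b, q, hq, rfl⟩ := exists_eq_add_ofBinary_of_weight_four hf₄
  obtain ⟨c, d, r, hr, rfl⟩ := exists_eq_add_ofBinary_of_weight_four hf₅
  have hmk : Ideal.Quotient.mk (productIdeal F' G') (ofBinary (σ G)) = Ideal.Quotient.mk _
      ((C a * X 4 + C b * X 5 + ofBinary q) * (C c * X 4 + C d * X 5 + ofBinary r)) := by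
    rw [map_mul, ← h₄, ← h₅, ← map_mul, ← map_mul, mk_X_four_mul_X_five, hΦσ]
    rfl
  have hσG : σ G = (C a + C b * G' + q) * (C c + C d * G' + r) := by
    simpa [retraction_mk, bind₁_ofBinary] using
      congrArg (retraction 1 F' 1 G' (one_mul F') (one_mul G')) hmk
  have hσG' : σ G = (C b + C a * G' + q) * (C d + C c * G' + r) := by
    rw [add_comm (C b), add_comm (C d)]
    simpa [retraction_mk, bind₁_ofBinary] using
      congrArg (retraction 1 F' G' 1 (one_mul F') (mul_one G')) hmk
  have hσG_hom := isHomogeneous_apply_of_linear (σ := (σ : _ →ₐ[R] _)) hσ hG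
  obtain ⟨hac, harcq⟩ := eq_zero_of_isHomogeneous_four_eq_mul hσG_hom hG' hq hr hσG
  obtain ⟨hbd, hbrdq⟩ := eq_zero_of_isHomogeneous_four_eq_mul hσG_hom hG' hq hr hσG'
  have hqr : q * r = 0 := by
    -- Otherwise `a = b = 0` and `Φ` sends `X 4` into `R[x, y]`, which it maps onto itself.
    by_contra hqr
    have ha := ((mul_eq_zero_or_of_add_eq_zero hac harcq).resolve_left hqr).1
    have hb := ((mul_eq_zero_or_of_add_eq_zero hbd hbrdq).resolve_left hqr).1
    refine mk_X_four_ne_mk_ofBinary (F := F)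
      (constantCoeff_eq_zero_of_isHomogeneous hG four_ne_zero) (σ.symm q) (Φ.injective ?_)
    rw [h₄, hΦσ]
    simp [C_eq_zero.1 ha, C_eq_zero.1 hb]
  exact ⟨C a * C d + C b * C c + C b * r + C d * q + C b * C d * G', by
    linear_combination hσG + hac + harcq + hqr⟩

theorem IsGradedEquiv.exists_algEquiv_associated [IsDomain R] (hΦ : IsGradedEquiv Φ)
    (hF : F.IsHomogeneous 3) (hF' : F'.IsHomogeneous 3)
    (hG : G.IsHomogeneous 4) (hG' : G'.IsHomogeneous 4) :
    ∃ σ : MvPolynomial (Fin 2) R ≃ₐ[R] MvPolynomial (Fin 2) R,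
      RestrictsTo Φ σ ∧ Associated (σ F) F' ∧ Associated (σ G) G' := by
  obtain ⟨σ, hσ, hσ', hΦσ⟩ := hΦ.exists_algEquiv
  refine ⟨σ, hΦσ, associated_of_dvd_dvd ?_ (hΦ.dvd_apply_of_isHomogeneous_three hσ hΦσ hF hF'),
    associated_of_dvd_dvd ?_ (hΦ.dvd_apply_of_isHomogeneous_four hσ hΦσ hG hG')⟩
  · simpa using map_dvd σ (hΦ.symm.dvd_apply_of_isHomogeneous_three hσ' hΦσ.symm hF' hF)
  · simpa using map_dvd σ (hΦ.symm.dvd_apply_of_isHomogeneous_four hσ' hΦσ.symm hG' hG)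

end Invariants

section Relations

lemma exists_apply_X_of_associated {K : Type*} [Field K] (h3 : (3 : K) ≠ 0)
    (σ : MvPolynomial (Fin 2) K ≃ₐ[K] MvPolynomial (Fin 2) K)
    (hF : Associated (σ (X 0 ^ 2 * X 1)) ((X 0 + C 3 * X 1) ^ 2 * X 1))
    (hG : Associated (σ ((X 0 + C 2 * X 1) ^ 3 * X 1)) (X 0 ^ 3 * X 1)) :
    ∃ c : K, c ≠ 0 ∧ σ (X 0) = C (-(2 * c / 3)) * X 0 + C (-(2 * c)) * X 1 ∧
      σ (X 1) = C c * X 1 := by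
  have hprime (i : Fin 2) : Prime (σ (X i)) := (MulEquiv.prime_iff σ).2 (prime_X i)
  have hprime₂ : Prime (σ (X 0 + C 2 * X 1)) :=
    (MulEquiv.prime_iff σ).2 (by simpa using prime_linearForm (.inl one_ne_zero) (b := (2 : K)))
  have hprime₃ : Prime (X 0 + C 3 * X 1 : MvPolynomial (Fin 2) K) := by
    simpa using prime_linearForm (.inl one_ne_zero) (b := (3 : K))
  rw [map_mul, map_pow] at hF hG
  obtain ⟨hX₀, hX₁⟩ :=
    associated_of_associated_pow_mul (hprime 0) (hprime 1) hprime₃ le_rfl hF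
  obtain ⟨hX₂, -⟩ :=
    associated_of_associated_pow_mul hprime₂ (hprime 1) (prime_X 0) (by norm_num) hG
  obtain ⟨a, -, ha⟩ := exists_eq_C_mul_of_associated hX₀
  obtain ⟨c, hc, hσc⟩ := exists_eq_C_mul_of_associated hX₁
  obtain ⟨e, -, he⟩ := exists_eq_C_mul_of_associated hX₂
  have hac : 3 * a + 2 * c = 0 := by
    refine (linearForm_inj (a := a) (a' := e) (b' := 0)).1 ?_ |>.2
    have hσC : σ (C 2) = C 2 := σ.commutes 2
    rw [map_add, map_mul, hσC, ha, hσc] at he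
    simp only [C_add, C_mul, C_0]
    linear_combination he
  have ha' : a = -(2 * c / 3) := by
    field_simp
    linear_combination hac
  have hb : -(2 * c) = 3 * a := by linear_combination -hac
  refine ⟨c, hc, ?_, hσc⟩
  rw [← ha', hb, ha, C_mul]
  ring

lemma span_pair_le_span_insert_insert {R : Type*} [Semiring R] {a b : R} {s : Set R} :
    Ideal.span {a, b} ≤ Ideal.span (insert a (insert b s)) :=
  Ideal.span_mono (by grind)

lemma idA_eq_productIdeal :
    idA = productIdeal (X 0 ^ 2 * X 1) (C (27 / 8) * ((X 0 + C 2 * X 1) ^ 3 * X 1)) := by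
  have hC : (8 : P6) * C (27 / 8 : ℝ) = 27 := by
    rw [← map_ofNat (C : ℝ →+* P6) 8, ← C_mul, ← map_ofNat (C : ℝ →+* P6) 27]
    norm_num
  have hspan : productIdeal (X 0 ^ 2 * X 1) (C (27 / 8 : ℝ) * ((X 0 + C 2 * X 1) ^ 3 * X 1)) =
      Ideal.span {X 2 * X 3 - X 0 ^ 2 * X 1,
        X 4 * X 5 - C (27 / 8) * ((X 0 + 2 * X 1) ^ 3 * X 1)} := by
    simp [productIdeal, ofBinary, map_ofNat (C : ℝ →+* P6) 2]
  rw [hspan, idA]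
  apply le_antisymm <;>
    simp only [Ideal.span_le, Set.insert_subset_iff, Set.singleton_subset_iff, SetLike.mem_coe]
  · simp only [Ideal.mem_span_pair]
    refine ⟨⟨-1, 0, ?_⟩, ⟨27 * (X 0 + 6 * X 1), -8, ?_⟩,
      ⟨-81 * X 0 ^ 2 - 432 * X 0 * X 1 - 648 * X 1 ^ 2, 24 * X 0 - 16 * X 1, ?_⟩,
      ⟨27 * (X 0 ^ 3 + 12 * X 0 * X 1 ^ 2 + 8 * X 1 ^ 3) + 162 * (X 2 * X 3 + X 0 ^ 2 * X 1),
        -8 * X 0 ^ 2, ?_⟩⟩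
    · ring
    · linear_combination ((X 0 + 2 * X 1) ^ 3 * X 1) * hC
    · linear_combination (-(3 * X 0 - 2 * X 1) * ((X 0 + 2 * X 1) ^ 3 * X 1)) * hC
    · linear_combination (X 0 ^ 2 * ((X 0 + 2 * X 1) ^ 3 * X 1)) * hC
  · have hC' : (8 : P6) * C (1 / 8 : ℝ) = 1 := by
      rw [← map_ofNat (C : ℝ →+* P6) 8, ← C_mul, ← C_1]
      norm_num
    refine ⟨span_pair_le_span_insert_insert (Ideal.mem_span_pair.2 ⟨-1, 0, by ring⟩),
      span_pair_le_span_insert_insert (Ideal.mem_span_pair.2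
        ⟨-C (1 / 8) * (27 * (X 0 + 6 * X 1)), -C (1 / 8), ?_⟩)⟩
    linear_combination (X 4 * X 5 - C (27 / 8) * ((X 0 + 2 * X 1) ^ 3 * X 1)) * hC' +
      C (1 / 8) * ((X 0 + 2 * X 1) ^ 3 * X 1) * hC

lemma idB_eq_productIdeal :
    idB = productIdeal (C (4 / 9) * ((X 0 + C 3 * X 1) ^ 2 * X 1)) (X 0 ^ 3 * X 1) := by
  have hC : (9 : P6) * C (4 / 9 : ℝ) = 4 := by
    rw [← map_ofNat (C : ℝ →+* P6) 9, ← C_mul, ← map_ofNat (C : ℝ →+* P6) 4]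
    norm_num
  have hspan : productIdeal (C (4 / 9 : ℝ) * ((X 0 + C 3 * X 1) ^ 2 * X 1)) (X 0 ^ 3 * X 1) =
      Ideal.span {X 2 * X 3 - C (4 / 9) * ((X 0 + 3 * X 1) ^ 2 * X 1),
        X 4 * X 5 - X 0 ^ 3 * X 1} := by
    simp [productIdeal, ofBinary, map_ofNat (C : ℝ →+* P6) 3]
  rw [hspan, idB]
  apply le_antisymm <;>
    simp only [Ideal.span_le, Set.insert_subset_iff, Set.singleton_subset_iff, SetLike.mem_coe]
  · simp only [Ideal.mem_span_pair]
    refine ⟨⟨-9, 0, ?_⟩, ⟨9 * (X 0 - 6 * X 1), -4, ?_⟩,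
      ⟨-9 * (X 0 ^ 2 - 2 * X 0 * X 1 + 3 * X 1 ^ 2), 4 * (X 0 + 4 * X 1), ?_⟩,
      ⟨9 * X 0 ^ 3, -4 * (X 0 + 3 * X 1) ^ 2, ?_⟩⟩
    · linear_combination ((X 0 + 3 * X 1) ^ 2 * X 1) * hC
    · linear_combination (-(X 0 - 6 * X 1) * ((X 0 + 3 * X 1) ^ 2 * X 1)) * hC
    · linear_combination ((X 0 ^ 2 - 2 * X 0 * X 1 + 3 * X 1 ^ 2) *
        ((X 0 + 3 * X 1) ^ 2 * X 1)) * hC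
    · linear_combination (-X 0 ^ 3 * ((X 0 + 3 * X 1) ^ 2 * X 1)) * hC
  · have hC' : (36 : P6) * C (1 / 36 : ℝ) = 1 := by
      rw [← map_ofNat (C : ℝ →+* P6) 36, ← C_mul, ← C_1]
      norm_num
    refine ⟨span_pair_le_span_insert_insert (Ideal.mem_span_pair.2 ⟨-4 * C (1 / 36), 0, ?_⟩),
      span_pair_le_span_insert_insert (Ideal.mem_span_pair.2
        ⟨-9 * C (1 / 36) * (X 0 - 6 * X 1), -9 * C (1 / 36), ?_⟩)⟩
    · linear_combination (X 2 * X 3 - C (4 / 9) * ((X 0 + 3 * X 1) ^ 2 * X 1)) * hC' +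
        4 * C (1 / 36) * ((X 0 + 3 * X 1) ^ 2 * X 1) * hC
    · linear_combination (X 4 * X 5 - X 0 ^ 3 * X 1) * hC'

end Relations

/-- every degree-preserving isomorphism of graded ℝ-algebras
`Q_A = ℝ[p]/(R_1,…,R_4) → Q_B = ℝ[q]/(R'_1,…,R'_4)` sends `p_1 ↦ -(2c/3)q_1 - 2c·q_2`
and `p_2 ↦ c·q_2` for some real `c ≠ 0`; in particular no such isomorphism maps both
`p_1` and `p_2` to nonnegative linear combinations of `q_1` and `q_2`. -/
theorem stmt17 :
    ∀ Φ : (P6 ⧸ idA) ≃ₐ[ℝ] (P6 ⧸ idB),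
      (∀ d : ℕ,
        Φ '' (Ideal.Quotient.mk idA '' {f : P6 | f.IsWeightedHomogeneous w6 d})
          = Ideal.Quotient.mk idB '' {f : P6 | f.IsWeightedHomogeneous w6 d}) →
      (∃ c : ℝ, c ≠ 0 ∧
          Φ (Ideal.Quotient.mk idA (X 0))
            = Ideal.Quotient.mk idB (C (-(2 * c / 3)) * X 0 + C (-(2 * c)) * X 1) ∧
          Φ (Ideal.Quotient.mk idA (X 1))
            = Ideal.Quotient.mk idB (C c * X 1))
      ∧
      ¬ ∃ d₁ d₂ e₁ e₂ : ℝ, 0 ≤ d₁ ∧ 0 ≤ d₂ ∧ 0 ≤ e₁ ∧ 0 ≤ e₂ ∧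
          Φ (Ideal.Quotient.mk idA (X 0))
            = Ideal.Quotient.mk idB (C d₁ * X 0 + C d₂ * X 1) ∧
          Φ (Ideal.Quotient.mk idA (X 1))
            = Ideal.Quotient.mk idB (C e₁ * X 0 + C e₂ * X 1) := by
  rw [idA_eq_productIdeal, idB_eq_productIdeal]
  intro Φ hΦ
  obtain ⟨σ, hΦσ, hF, hG⟩ := IsGradedEquiv.exists_algEquiv_associated hΦ
    ((isHomogeneous_X_pow 0 2).mul (isHomogeneous_X ℝ 1))
    (isHomogeneous_C_mul_linearForm_pow_mul_X _ _ 2)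
    (isHomogeneous_C_mul_linearForm_pow_mul_X _ _ 3)
    ((isHomogeneous_X_pow 0 3).mul (isHomogeneous_X ℝ 1))
  obtain ⟨c, hc, hσ₀, hσ₁⟩ := exists_apply_X_of_associated three_ne_zero σ
    (hF.trans (associated_C_mul (by norm_num) _))
    (((associated_C_mul (by norm_num) _).symm.map σ).trans hG)
  have h₀ := hΦσ.apply_mk_X_zero hσ₀
  have h₁ := hΦσ.apply_mk_X_one hσ₁
  refine ⟨⟨c, hc, h₀, h₁⟩, ?_⟩
  rintro ⟨d₁, d₂, e₁, e₂, hd₁, -, -, he₂, hd, he⟩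
  obtain ⟨hcd, -⟩ := linearForm_inj_of_mk_eq_mk (h₀.symm.trans hd)
  obtain ⟨-, hce⟩ := linearForm_inj_of_mk_eq_mk (a := (0 : ℝ)) (by simpa using h₁.symm.trans he)
  apply hc
  linarith
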